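/- Let λ be a gl(m|n)-weight. If (λ̃+ρ_{m+1|n}, δ_0−δ_i) ∉ ℤ_{>0} for 1 ≤ i ≤ m and (λ̃+ρ_{m+1|n}, δ_0−δ_i) ∉ ℤ_{≥0} for 1̄ ≤ i ≤ n̄, then the U(gl(m+1|n))-module F_a ⊗ L(λ) is simple, and hence F_a ⊗ L(λ) ≅ L(λ̃). -/

import Mathlib

set_option maxHeartbeats 1000000
set_option synthInstance.maxHeartbeats 400000

noncomputable section
open scoped TensorProduct

/-- The index set `I = {1,…,m,1̄,…,n̄}` of `gl(m|n)`; `Sum.inl` are the even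
(unbarred) indices, `Sum.inr` the odd (barred) ones.  The index set
`Î = {0} ∪ I` of `gl(m+1|n)` is realized as `Ind (m+1) n`, with `0 = Sum.inl 0`. -/
abbrev Ind (m n : ℕ) := Fin m ⊕ Fin n

/-- Parity of an index, as `0` or `1`. -/
def pI {m n : ℕ} : Ind m n → ℕ := Sum.elim (fun _ => 0) (fun _ => 1)

/-- The total order `1 < ⋯ < m < 1̄ < ⋯ < n̄` on `I` (and, with `m+1` in place of `m`,
the order `0 < 1 < ⋯ < m < 1̄ < ⋯ < n̄` on `Î`). -/
def iltI {m n : ℕ} : Ind m n → Ind m n → Prop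
  | Sum.inl a, Sum.inl b => a < b
  | Sum.inl _, Sum.inr _ => True
  | Sum.inr _, Sum.inl _ => False
  | Sum.inr a, Sum.inr b => a < b

/-- The distinguished index `0` of `Î`. -/
def z0 {m n : ℕ} : Ind (m+1) n := Sum.inl 0

/-- The inclusion `I ↪ Î`. -/
def emb {m n : ℕ} : Ind m n → Ind (m+1) n := Sum.map Fin.succ id

lemma emb_injective {m n : ℕ} : Function.Injective (emb (m := m) (n := n)) := by
  intro a b h
  cases a <;> cases b <;> simp [emb, Fin.succ_inj] at h <;> simp [h]

lemma emb_ne_z0 {m n : ℕ} (a : Ind m n) : emb a ≠ z0 := by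
  cases a <;> simp [emb, z0, Fin.succ_ne_zero]

/-- Builds a linear map out of a space with basis `α` from a function on basis vectors. -/
def mkOp {α M : Type} [AddCommGroup M] [Module ℂ M] (g : α → M) : (α →₀ ℂ) →ₗ[ℂ] M :=
  Finsupp.lsum ℂ fun x => LinearMap.toSpanSingleton ℂ M (g x)

/-- Number of odd variables occurring before position `i`. -/
def cntB {n : ℕ} (b : Fin n → Bool) (i : Fin n) : ℕ :=
  (Finset.univ.filter fun j => j < i ∧ b j = true).card

/-- Number of odd variables occurring. -/
def cntA {n : ℕ} (b : Fin n → Bool) : ℕ := (Finset.univ.filter fun j => b j = true).card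


/-- The defining (super-)commutation relations of `gl`:
`e_ij e_kl − (−1)^{(|i|+|j|)(|k|+|l|)} e_kl e_ij = δ_jk e_il − (−1)^{(|i|+|j|)(|k|+|l|)} δ_li e_kj`. -/
inductive glRel (ι : Type) (p : ι → ℕ) [DecidableEq ι] :
    FreeAlgebra ℂ (ι × ι) → FreeAlgebra ℂ (ι × ι) → Prop
  | basic (i j k l : ι) : glRel ι p
      (FreeAlgebra.ι ℂ (i, j) * FreeAlgebra.ι ℂ (k, l)
        - ((-1 : ℂ) ^ ((p i + p j) * (p k + p l))) •
            (FreeAlgebra.ι ℂ (k, l) * FreeAlgebra.ι ℂ (i, j)))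
      ((if j = k then FreeAlgebra.ι ℂ (i, l) else 0)
        - ((-1 : ℂ) ^ ((p i + p j) * (p k + p l))) •
            (if l = i then FreeAlgebra.ι ℂ (k, j) else 0))

/-- The universal enveloping superalgebra of the general linear Lie superalgebra with
index set `ι` and parity `p`, presented by generators `e_ij` and the super-commutator
relations. -/
abbrev UEA (ι : Type) (p : ι → ℕ) [DecidableEq ι] : Type := RingQuot (glRel ι p)

/-- The generator `e_ij` of `UEA ι p`. -/
def gen {ι : Type} (p : ι → ℕ) [DecidableEq ι] (i j : ι) : UEA ι p :=
  RingQuot.mkAlgHom ℂ (glRel ι p) (FreeAlgebra.ι ℂ (i, j))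

/-- Monomials of the `D'(m|n)`-module `F_a`: such a monomial
`t_0^{a−k_1−⋯−k_{n̄}} t_1^{k_1}⋯t_m^{k_m} t_{1̄}^{k_{1̄}}⋯t_{n̄}^{k_{n̄}}` is determined by the
exponents `(k_1,…,k_m,k_{1̄},…,k_{n̄})`. -/
abbrev FaMon (m n : ℕ) := (Fin m → ℕ) × (Fin n → Bool)

/-- The module `F_a`, as the vector space with basis its monomials. -/
abbrev FaSp (m n : ℕ) : Type := FaMon m n →₀ ℂ

/-- A basis monomial of `F_a`. -/
def amono {m n : ℕ} (x : FaMon m n) : FaSp m n := Finsupp.single x 1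

/-- The parity of a monomial of `F_a`. -/
def parM {m n : ℕ} (x : FaMon m n) : ℕ := cntA x.2

/-- The monomial `t_0^a` of `F_a`. -/
def hwMon (m n : ℕ) : FaMon m n := (fun _ => 0, fun _ => false)

/-- Multiplication by `t_i/t_0` on `F_a`, even `i`. -/
def aDivE {m n : ℕ} (i : Fin m) : Module.End ℂ (FaSp m n) :=
  mkOp fun x => amono (Function.update x.1 i (x.1 i + 1), x.2)

/-- Multiplication by `t_ī/t_0` on `F_a`, odd `ī`. -/
def aDivO {m n : ℕ} (i : Fin n) : Module.End ℂ (FaSp m n) :=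
  mkOp fun x => if x.2 i then 0 else
    ((-1 : ℂ) ^ (cntB x.2 i)) • amono (x.1, Function.update x.2 i true)

/-- The operator `t_0∂_0` on `F_a` (the exponent of `t_0` is `a` minus the total degree of the
other variables). -/
def aPar0 {m n : ℕ} (a : ℂ) : Module.End ℂ (FaSp m n) :=
  mkOp fun x => (a - (∑ i, (x.1 i : ℂ)) - (cntA x.2 : ℂ)) • amono x

/-- The operator `t_0∂_i` on `F_a`, even `i`. -/
def aParE {m n : ℕ} (i : Fin m) : Module.End ℂ (FaSp m n) :=
  mkOp fun x => (x.1 i : ℂ) • amono (Function.update x.1 i (x.1 i - 1), x.2)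

/-- The operator `t_0∂_ī` on `F_a`, odd `ī`. -/
def aParO {m n : ℕ} (i : Fin n) : Module.End ℂ (FaSp m n) :=
  mkOp fun x => if x.2 i then
    ((-1 : ℂ) ^ (cntB x.2 i)) • amono (x.1, Function.update x.2 i false) else 0

/-- `t_i/t_0` on `F_a` for `i ∈ I`. -/
def aDiv {m n : ℕ} : Ind m n → Module.End ℂ (FaSp m n) := Sum.elim aDivE aDivO

/-- `t_0∂_i` on `F_a` for `i ∈ Î`. -/
def aParB {m n : ℕ} (a : ℂ) : Ind (m+1) n → Module.End ℂ (FaSp m n) :=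
  Sum.elim (Fin.cases (aPar0 a) aParE) aParO

/-- `t_i/t_0` on `F_a` for `i ∈ Î`. -/
def aDivB {m n : ℕ} : Ind (m+1) n → Module.End ℂ (FaSp m n) :=
  Sum.elim (Fin.cases 1 aDivE) aDivO

/-- The operator `t_i∂_j` on `F_a`, `i, j ∈ Î`. -/
def aTD {m n : ℕ} (a : ℂ) (i j : Ind (m+1) n) : Module.End ℂ (FaSp m n) :=
  aDivB i * aParB a j

/-- The simple highest weight module `L(λ)` over `U(gl(m|n))`: a simple module with a
(nonzero) highest weight vector of weight `λ`. -/
structure SimpleHW (m n : ℕ) (lam : Ind m n → ℂ) where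
  L : Type
  [acg : AddCommGroup L]
  [mod : Module ℂ L]
  ρ : UEA (Ind m n) pI →ₐ[ℂ] Module.End ℂ L
  v : L
  v_ne : v ≠ 0
  hw : ∀ i j : Ind m n, iltI i j → ρ (gen pI i j) v = 0
  hwt : ∀ i : Ind m n, ρ (gen pI i i) v = lam i • v
  simple : ∀ N : Submodule ℂ L, (∀ u x, x ∈ N → ρ u x ∈ N) → N = ⊥ ∨ N = ⊤

attribute [instance] SimpleHW.acg SimpleHW.mod

/-- The Verma module `M(λ)` over `U(gl(m|n))`: a module generated by a highest weight vector
of weight `λ` which is universal among such. -/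
structure VermaM (m n : ℕ) (lam : Ind m n → ℂ) where
  L : Type
  [acg : AddCommGroup L]
  [mod : Module ℂ L]
  ρ : UEA (Ind m n) pI →ₐ[ℂ] Module.End ℂ L
  v : L
  v_ne : v ≠ 0
  hw : ∀ i j : Ind m n, iltI i j → ρ (gen pI i j) v = 0
  hwt : ∀ i : Ind m n, ρ (gen pI i i) v = lam i • v
  gens : ∀ N : Submodule ℂ L, (∀ u x, x ∈ N → ρ u x ∈ N) → v ∈ N → N = ⊤
  univ : ∀ (W : Type) [AddCommGroup W] [Module ℂ W]
      (ρW : UEA (Ind m n) pI →ₐ[ℂ] Module.End ℂ W) (w : W),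
      (∀ i j : Ind m n, iltI i j → ρW (gen pI i j) w = 0) →
      (∀ i : Ind m n, ρW (gen pI i i) w = lam i • w) →
      ∃ g : L →ₗ[ℂ] W, g v = w ∧ ∀ u x, g (ρ u x) = ρW u (g x)

attribute [instance] VermaM.acg VermaM.mod

/-- The predicate expressing that `Θ` is the representation of `U(gl(m+1|n))` on
`F_a ⊗ L` obtained via `φ_R` from a representation `ρ` of `U(gl(m|n))` on `L`, where the
central element `R` acts by the scalar `r`; the formulas for the action of the generators on
pure tensors (with the appropriate Koszul signs) are written out explicitly. -/
def IsTensorRep {m n : ℕ} (a r : ℂ) {L : Type} [AddCommGroup L] [Module ℂ L]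
    (ρ : UEA (Ind m n) pI →ₐ[ℂ] Module.End ℂ L)
    (Θ : UEA (Ind (m+1) n) pI →ₐ[ℂ] Module.End ℂ (FaSp m n ⊗[ℂ] L)) : Prop :=
  (∀ (c d : Ind m n) (x : FaMon m n) (v : L),
    Θ (gen pI (emb c) (emb d)) (amono x ⊗ₜ[ℂ] v) =
      (aTD a (emb c) (emb d)) (amono x) ⊗ₜ[ℂ] v
      + ((-1 : ℂ) ^ ((pI c + pI d) * parM x)) • (amono x ⊗ₜ[ℂ] (ρ (gen pI c d) v))
      + (if c = d then (((-1 : ℂ) ^ (pI c * pI d)) * r) • (amono x ⊗ₜ[ℂ] v) else 0)) ∧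
  (∀ (c : Ind m n) (x : FaMon m n) (v : L),
    Θ (gen pI (emb c) z0) (amono x ⊗ₜ[ℂ] v) =
      (aTD a (emb c) z0) (amono x) ⊗ₜ[ℂ] v
      - ∑ j : Ind m n, (((-1 : ℂ) ^ (pI c * pI j)) * ((-1 : ℂ) ^ ((pI c + pI j) * parM x))) •
          ((aDiv j (amono x)) ⊗ₜ[ℂ] (ρ (gen pI c j) v))) ∧
  (∀ (d : Ind m n) (x : FaMon m n) (v : L),
    Θ (gen pI z0 (emb d)) (amono x ⊗ₜ[ℂ] v) = (aTD a z0 (emb d)) (amono x) ⊗ₜ[ℂ] v) ∧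
  (∀ (x : FaMon m n) (v : L),
    Θ (gen pI z0 z0) (amono x ⊗ₜ[ℂ] v) =
      (aTD a z0 z0) (amono x) ⊗ₜ[ℂ] v + r • (amono x ⊗ₜ[ℂ] v))

/-- The shifted weight `λ̃ = (a+r, λ_1+r, …, λ_m+r, λ_{1̄}−r, …, λ_{n̄}−r)`. -/
def lamTilde {m n : ℕ} (a r : ℂ) (lam : Ind m n → ℂ) : Ind (m+1) n → ℂ :=
  Sum.elim (Fin.cases (a + r) fun k => lam (Sum.inl k) + r) fun k => lam (Sum.inr k) - r

/-- The Weyl vector `ρ_{m|n} = (m, m−1, …, 1, −1, −2, …, −n)`. -/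
def rhoS {m n : ℕ} : Ind m n → ℂ := Sum.elim (fun k => (m : ℂ) - k) fun k => -(k : ℂ) - 1

/-- Antidominance of a weight of `gl(m|n)`:
`⟨λ+ρ, α^∨⟩ ∉ ℤ_{>0}` for all positive even roots `α`. -/
def Antidom {m n : ℕ} (lam : Ind m n → ℂ) : Prop :=
  (∀ i j : Fin m, i < j → ¬∃ N : ℕ,
    (lam (Sum.inl i) + rhoS (m:=m) (n:=n) (Sum.inl i)) - (lam (Sum.inl j) + rhoS (m:=m) (n:=n) (Sum.inl j)) = (N : ℂ) + 1) ∧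
  (∀ i j : Fin n, i < j → ¬∃ N : ℕ,
    (lam (Sum.inr i) + rhoS (m:=m) (n:=n) (Sum.inr i)) - (lam (Sum.inr j) + rhoS (m:=m) (n:=n) (Sum.inr j)) = (N : ℂ) + 1)

/-- Typicality of a weight of `gl(m|n)`:
`(λ+ρ, α) ≠ 0` for all positive odd isotropic roots `α = δ_i − ε_j`. -/
def Typical {m n : ℕ} (lam : Ind m n → ℂ) : Prop :=
  ∀ (i : Fin m) (j : Fin n),
    (lam (Sum.inl i) + rhoS (m:=m) (n:=n) (Sum.inl i)) + (lam (Sum.inr j) + rhoS (m:=m) (n:=n) (Sum.inr j)) ≠ 0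

/-! Let `N` be a nonzero subrepresentation of `F_a ⊗ L(λ)`. The generators `e_{0d}` act by
`t_0∂_d`, which lowers the degree in the variables other than `t_0`; hence `N` contains
`t_0^a ⊗ w` for some `w ≠ 0`, and then `t_0^a ⊗ L(λ)`, because `t_0^a` is killed by all `t_c∂_d`
with `c, d ∈ I` and `L(λ)` is simple. In particular `t_0^a ⊗ v ∈ N` for the highest weight vector
`v`. To climb from here, let `x` be a monomial and consider

  `e_{c0}(x ⊗ v) + ∑_{j < c} (-1)^{|j|} e_{cj}((t_j/t_0)x ⊗ v) = κ_c(x) (t_c/t_0)x ⊗ v`.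

If `(t_c/t_0)x ≠ 0`, then the scalar `κ_c(x)` is `(λ̃+ρ, δ_0-δ_c)` minus a natural number for odd
`c`, and minus a positive integer for even `c`, so it does not vanish. If `x ⊗ v ∈ N`, then
`(t_c/t_0)x ⊗ v ∈ N` for all `c` by induction on `c`, so `N` contains `F_a ⊗ v`, and simplicity of
`L(λ)` gives `N = F_a ⊗ L(λ)`.

The isomorphism with `L(λ̃)` holds because `t_0^a ⊗ v` is a highest weight vector of weight `λ̃`:
for two simple modules with highest weight vectors of the same weight, the pair of these vectors
generates the graph of an isomorphism in the direct sum. -/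

/-! ### Representations of an algebra -/

section Representations

variable {R A V W : Type*} [CommSemiring R] [Semiring A] [Algebra R A]
  [AddCommMonoid V] [Module R V] [AddCommMonoid W] [Module R W]
  {ρ : A →ₐ[R] Module.End R V} {σ : A →ₐ[R] Module.End R W}

/-- The submodule `N` is a subrepresentation of `ρ`. -/
def IsSubrep (ρ : A →ₐ[R] Module.End R V) (N : Submodule R V) : Prop :=
  ∀ u, ∀ x ∈ N, ρ u x ∈ N

/-- The representation `ρ` has no subrepresentations besides `⊥` and `⊤`; as in `SimpleHW`, the
zero representation is not excluded. -/
def IsSimpleRep (ρ : A →ₐ[R] Module.End R V) : Prop :=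
  ∀ N, IsSubrep ρ N → N = ⊥ ∨ N = ⊤

/-- The direct sum of two representations, on the product of their spaces. -/
def prodRep (ρ : A →ₐ[R] Module.End R V) (σ : A →ₐ[R] Module.End R W) :
    A →ₐ[R] Module.End R (V × W) :=
  (LinearMap.prodMapAlgHom R V W).comp (ρ.prod σ)

lemma prodRep_apply (u : A) (x : V × W) : prodRep ρ σ u x = (ρ u x.1, σ u x.2) :=
  rfl

lemma IsSubrep.inf {N K : Submodule R V} (hN : IsSubrep ρ N) (hK : IsSubrep ρ K) :
    IsSubrep ρ (N ⊓ K) :=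
  fun u x hx => ⟨hN u x hx.1, hK u x hx.2⟩

lemma isSubrep_ker {f : V →ₗ[R] W} (hf : ∀ u x, f (ρ u x) = σ u (f x)) :
    IsSubrep ρ f.ker := by
  intro u x hx
  rw [LinearMap.mem_ker] at hx ⊢
  rw [hf, hx, map_zero]

lemma IsSubrep.map {f : V →ₗ[R] W} (hf : ∀ u x, f (ρ u x) = σ u (f x))
    {N : Submodule R V} (hN : IsSubrep ρ N) : IsSubrep σ (N.map f) := by
  rintro u _ ⟨x, hx, rfl⟩
  exact ⟨ρ u x, hN u x hx, hf u x⟩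

lemma IsSimpleRep.eq_top (hρ : IsSimpleRep ρ) {N : Submodule R V} (hN : IsSubrep ρ N)
    {x : V} (hx : x ∈ N) (hx₀ : x ≠ 0) : N = ⊤ :=
  (hρ N hN).resolve_left fun h => hx₀ ((Submodule.mem_bot R).1 (h ▸ hx))

end Representations

/-! ### Highest weight vectors -/

section HighestWeight

variable {ι : Type} [DecidableEq ι] {p : ι → ℕ} {V W : Type*}
  [AddCommGroup V] [Module ℂ V] [AddCommGroup W] [Module ℂ W]
  {ρ : UEA ι p →ₐ[ℂ] Module.End ℂ V} {σ : UEA ι p →ₐ[ℂ] Module.End ℂ W}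

lemma gen_mul_gen (i j k l : ι) :
    gen p i j * gen p k l = (-1 : ℂ) ^ ((p i + p j) * (p k + p l)) • (gen p k l * gen p i j) +
      ((if j = k then gen p i l else 0) -
        (-1 : ℂ) ^ ((p i + p j) * (p k + p l)) • if l = i then gen p k j else 0) := by
  have h := RingQuot.mkAlgHom_rel ℂ (glRel.basic (p := p) i j k l)
  simp only [map_sub, map_smul, map_mul, apply_ite (RingQuot.mkAlgHom ℂ (glRel ι p)),
    map_zero] at h
  exact sub_eq_iff_eq_add'.1 h

lemma gen_apply_gen_apply (ρ : UEA ι p →ₐ[ℂ] Module.End ℂ V) (i j k l : ι) (x : V) :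
    ρ (gen p i j) (ρ (gen p k l) x) =
      (-1 : ℂ) ^ ((p i + p j) * (p k + p l)) • ρ (gen p k l) (ρ (gen p i j) x) +
      ((if j = k then ρ (gen p i l) x else 0) -
        (-1 : ℂ) ^ ((p i + p j) * (p k + p l)) • if l = i then ρ (gen p k j) x else 0) := by
  have h := congrArg (fun u => ρ u x) (gen_mul_gen (p := p) i j k l)
  split_ifs at h ⊢ <;> simpa using h

lemma isSubrep_of_gen {N : Submodule ℂ V} (h : ∀ i j, ∀ x ∈ N, ρ (gen p i j) x ∈ N) :
    IsSubrep ρ N := by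
  intro u
  obtain ⟨w, rfl⟩ := RingQuot.mkAlgHom_surjective ℂ (glRel ι p) u
  induction w using FreeAlgebra.induction with
  | grade0 c =>
    intro x hx
    simpa only [AlgHom.commutes, Module.algebraMap_end_apply] using N.smul_mem c hx
  | grade1 q => exact h q.1 q.2
  | mul a b ha hb =>
    intro x hx
    simpa only [map_mul, Module.End.mul_apply] using ha _ (hb _ hx)
  | add a b ha hb =>
    intro x hx
    simpa only [map_add, LinearMap.add_apply] using N.add_mem (ha _ hx) (hb _ hx)

lemma cartan_apply_gen_apply (ρ : UEA ι p →ₐ[ℂ] Module.End ℂ V) (i k l : ι) (x : V) :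
    ρ (gen p i i) (ρ (gen p k l) x) = ρ (gen p k l) (ρ (gen p i i) x) +
      ((if i = k then 1 else 0) - if i = l then 1 else 0 : ℂ) • ρ (gen p k l) x := by
  have hsign : (-1 : ℂ) ^ ((p i + p i) * (p k + p l)) = 1 :=
    ((Even.add_self (p i)).mul_right _).neg_one_pow
  rw [gen_apply_gen_apply, hsign, one_smul, one_smul, sub_smul]
  congr 2
  · split_ifs with h
    · rw [h, one_smul]
    · rw [zero_smul]
  · rcases eq_or_ne i l with rfl | h
    · simp
    · rw [if_neg h, if_neg h.symm, zero_smul]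

/-- `v` is a highest weight vector of weight `lam`, where `e_ij` is a raising operator if
`rk i < rk j`. That `v ≠ 0` is not part of the definition. -/
structure IsHighestWeightVector (rk : ι → ℕ) (ρ : UEA ι p →ₐ[ℂ] Module.End ℂ V) (lam : ι → ℂ)
    (v : V) : Prop where
  raising : ∀ i j, rk i < rk j → ρ (gen p i j) v = 0
  weight : ∀ i, ρ (gen p i i) v = lam i • v

/-- The span of all vectors obtained from `v` by lowering operators, that is `U(𝔫⁻)v`: the
smallest submodule that contains `v` and is stable under the `e_ij` with `rk j < rk i`. -/
def lowerSpan (rk : ι → ℕ) (ρ : UEA ι p →ₐ[ℂ] Module.End ℂ V) (v : V) : Submodule ℂ V :=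
  sInf {N | v ∈ N ∧ ∀ i j, rk j < rk i → ∀ x ∈ N, ρ (gen p i j) x ∈ N}

/-- The element `∑ rk i · e_ii` of the Cartan subalgebra, acting through `ρ`. It grades a highest
weight module by height. -/
def gradingOp [Fintype ι] (rk : ι → ℕ) (ρ : UEA ι p →ₐ[ℂ] Module.End ℂ V) : Module.End ℂ V :=
  ∑ i, (rk i : ℂ) • ρ (gen p i i)

section LowerSpan

variable {rk : ι → ℕ} {v : V}

lemma mem_lowerSpan_self (rk : ι → ℕ) (ρ : UEA ι p →ₐ[ℂ] Module.End ℂ V) (v : V) :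
    v ∈ lowerSpan rk ρ v :=
  Submodule.mem_sInf.2 fun _ hN => hN.1

lemma lowering_mem_lowerSpan {i j : ι} (hij : rk j < rk i) {x : V}
    (hx : x ∈ lowerSpan rk ρ v) : ρ (gen p i j) x ∈ lowerSpan rk ρ v :=
  Submodule.mem_sInf.2 fun N hN => hN.2 i j hij x (Submodule.mem_sInf.1 hx N hN)

lemma lowerSpan_le {N : Submodule ℂ V} (hv : v ∈ N)
    (hN : ∀ i j, rk j < rk i → ∀ x ∈ N, ρ (gen p i j) x ∈ N) : lowerSpan rk ρ v ≤ N :=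
  sInf_le ⟨hv, hN⟩

/-- Commuting `e_ij` past a lowering operator produces only operators `e_st`, so the vectors `x`
all of whose images `e_ij x` lie in `U(𝔫⁻)v` are stable under lowering. -/
lemma IsHighestWeightVector.isSubrep_lowerSpan (hrk : Function.Injective rk) {lam : ι → ℂ}
    (hv : IsHighestWeightVector rk ρ lam v) : IsSubrep ρ (lowerSpan rk ρ v) := by
  apply isSubrep_of_gen
  let T : Submodule ℂ V :=
    lowerSpan rk ρ v ⊓ ⨅ (i) (j), (lowerSpan rk ρ v).comap (ρ (gen p i j))
  have mem_T (x : V) : x ∈ T ↔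
      x ∈ lowerSpan rk ρ v ∧ ∀ i j, ρ (gen p i j) x ∈ lowerSpan rk ρ v := by
    simp only [T, Submodule.mem_inf, Submodule.mem_iInf, Submodule.mem_comap]
  suffices hT : lowerSpan rk ρ v ≤ T from fun i j x hx => ((mem_T x).1 (hT hx)).2 i j
  have hv_mem := mem_lowerSpan_self rk ρ v
  refine lowerSpan_le ((mem_T v).2 ⟨hv_mem, fun i j => ?_⟩) fun k l hlk x hx => ?_
  · rcases lt_trichotomy (rk i) (rk j) with h | h | h
    · rw [hv.raising i j h]
      exact zero_mem _
    · rw [hrk h, hv.weight]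
      exact Submodule.smul_mem _ _ hv_mem
    · exact lowering_mem_lowerSpan h hv_mem
  · obtain ⟨-, hx⟩ := (mem_T x).1 hx
    refine (mem_T _).2 ⟨hx k l, fun i j => ?_⟩
    rw [gen_apply_gen_apply]
    refine add_mem (Submodule.smul_mem _ _ (lowering_mem_lowerSpan hlk (hx i j)))
      (sub_mem ?_ (Submodule.smul_mem _ _ ?_))
    · split_ifs
      exacts [hx _ _, zero_mem _]
    · split_ifs
      exacts [hx _ _, zero_mem _]

section Grading

variable [Fintype ι]

lemma gradingOp_apply_of_weight {lam : ι → ℂ} {x : V}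
    (hx : ∀ i, ρ (gen p i i) x = lam i • x) :
    gradingOp rk ρ x = (∑ i, (rk i : ℂ) * lam i) • x := by
  simp only [gradingOp, LinearMap.sum_apply, LinearMap.smul_apply, hx, Finset.sum_smul, mul_smul]

lemma gradingOp_apply_gen_apply (k l : ι) (x : V) :
    gradingOp rk ρ (ρ (gen p k l) x) =
      ρ (gen p k l) (gradingOp rk ρ x) + ((rk k : ℂ) - rk l) • ρ (gen p k l) x := by
  simp only [gradingOp, LinearMap.sum_apply, LinearMap.smul_apply, map_sum, map_smul,
    cartan_apply_gen_apply, smul_add, Finset.sum_add_distrib, smul_smul, ← Finset.sum_smul]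
  simp [mul_sub]

lemma lowering_mem_eigenspace {i j : ι} (hij : rk j < rk i) {μ : ℂ} {x : V}
    (hx : x ∈ (gradingOp rk ρ).eigenspace μ) :
    ∃ s : ℕ, ρ (gen p i j) x ∈ (gradingOp rk ρ).eigenspace (μ + (s + 1)) := by
  obtain ⟨s, hs⟩ := Nat.exists_eq_add_of_lt hij
  refine ⟨s, ?_⟩
  rw [Module.End.mem_eigenspace_iff] at hx ⊢
  rw [gradingOp_apply_gen_apply, hx, map_smul, ← add_smul, hs]
  congr 1
  push_cast
  ring

lemma lowerSpan_le_span_sup_eigenspaces {μ : ℂ} (hv : v ∈ (gradingOp rk ρ).eigenspace μ) :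
    lowerSpan rk ρ v ≤
      ℂ ∙ v ⊔ ⨆ s : ℕ, (gradingOp rk ρ).eigenspace (μ + (s + 1)) := by
  set U : Submodule ℂ V := ⨆ s : ℕ, (gradingOp rk ρ).eigenspace (μ + (s + 1))
  have mem_U (s : ℕ) {x : V} (hx : x ∈ (gradingOp rk ρ).eigenspace (μ + (s + 1))) : x ∈ U :=
    Submodule.mem_iSup_of_mem s hx
  refine lowerSpan_le (Submodule.mem_sup_left (Submodule.mem_span_singleton_self v))
    fun i j hij x hx => Submodule.mem_sup_right ?_
  suffices h : ℂ ∙ v ⊔ U ≤ U.comap (ρ (gen p i j)) from h hx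
  refine sup_le ((Submodule.span_singleton_le_iff_mem _ _).2 ?_) (iSup_le fun t => ?_)
  · obtain ⟨s, hs⟩ := lowering_mem_eigenspace hij hv
    exact mem_U s hs
  · intro y hy
    obtain ⟨s, hs⟩ := lowering_mem_eigenspace hij hy
    refine mem_U (t + s + 1) ?_
    convert hs using 2
    push_cast
    ring

end Grading

lemma mem_span_singleton_of_mem_lowerSpan [Finite ι] {lam : ι → ℂ}
    (hv : ∀ i, ρ (gen p i i) v = lam i • v)
    {y : V} (hy : y ∈ lowerSpan rk ρ v) (hyw : ∀ i, ρ (gen p i i) y = lam i • y) :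
    y ∈ ℂ ∙ v := by
  cases nonempty_fintype ι
  set μ : ℂ := ∑ i, (rk i : ℂ) * lam i
  have hv_eig : v ∈ (gradingOp rk ρ).eigenspace μ :=
    Module.End.mem_eigenspace_iff.2 (gradingOp_apply_of_weight hv)
  have hy_eig : y ∈ (gradingOp rk ρ).eigenspace μ :=
    Module.End.mem_eigenspace_iff.2 (gradingOp_apply_of_weight hyw)
  obtain ⟨x, hx, w, hw, rfl⟩ :=
    Submodule.mem_sup.1 (lowerSpan_le_span_sup_eigenspaces hv_eig hy)
  have hx_eig : x ∈ (gradingOp rk ρ).eigenspace μ :=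
    (Submodule.span_singleton_le_iff_mem _ _).2 hv_eig hx
  have hw_eig : w ∈ (gradingOp rk ρ).eigenspace μ :=
    (Submodule.add_mem_iff_right _ hx_eig).1 hy_eig
  have hw_other : w ∈ ⨆ ν, ⨆ (_ : ν ≠ μ), (gradingOp rk ρ).eigenspace ν := by
    refine SetLike.le_def.1 (iSup_le fun s => ?_) hw
    exact le_iSup₂_of_le (μ + (s + 1)) (by simpa using Nat.cast_add_one_ne_zero s) le_rfl
  have hw₀ : w = 0 := Submodule.disjoint_def.1 ((gradingOp rk ρ).eigenspaces_iSupIndep μ) w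
    hw_eig hw_other
  rwa [hw₀, add_zero]

end LowerSpan

variable {rk : ι → ℕ} {lam : ι → ℂ} {v : V} {w : W}

lemma IsHighestWeightVector.prodMk (hv : IsHighestWeightVector rk ρ lam v)
    (hw : IsHighestWeightVector rk σ lam w) :
    IsHighestWeightVector rk (prodRep ρ σ) lam (v, w) where
  raising i j hij := by rw [prodRep_apply, hv.raising i j hij, hw.raising i j hij]; rfl
  weight i := by rw [prodRep_apply, hv.weight, hw.weight]; rfl

/-- If the kernel of `f` on `U(𝔫⁻)x` were nonzero, then `g` would map it onto `W`, and a preimage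
of `w` would have the weight of `x`, hence be a multiple of `x`, on which `f` is injective. -/
lemma IsSimpleRep.bijective_domRestrict_lowerSpan [Finite ι] {X : Type*} [AddCommGroup X]
    [Module ℂ X] {τ : UEA ι p →ₐ[ℂ] Module.End ℂ X} (hρ : IsSimpleRep ρ) (hσ : IsSimpleRep σ)
    (hrk : Function.Injective rk) {x : X} (hx : IsHighestWeightVector rk τ lam x)
    {f : X →ₗ[ℂ] V} {g : X →ₗ[ℂ] W} (hf : ∀ u y, f (τ u y) = ρ u (f y))
    (hg : ∀ u y, g (τ u y) = σ u (g y)) (hfg : Disjoint f.ker g.ker) (hfx : f x ≠ 0)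
    (hw : ∀ i, σ (gen p i i) w = lam i • w) (hw₀ : w ≠ 0) :
    Function.Bijective (f.domRestrict (lowerSpan rk τ x)) := by
  have hS := hx.isSubrep_lowerSpan hrk
  have hx_mem := mem_lowerSpan_self rk τ x
  constructor
  · rw [LinearMap.injective_domRestrict_iff, Submodule.disjoint_def]
    intro y hyS hyf
    by_contra hy₀
    have hgy : g y ≠ 0 := fun h => hy₀ (Submodule.disjoint_def.1 hfg y hyf h)
    have htop := hσ.eq_top ((hS.inf (isSubrep_ker hf)).map hg)
      (Submodule.mem_map_of_mem ⟨hyS, hyf⟩) hgy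
    obtain ⟨z, ⟨hzS, hzf⟩, hzw⟩ := (Submodule.eq_top_iff'.1 htop) w
    have hz_weight (i : ι) : τ (gen p i i) z = lam i • z := by
      refine sub_eq_zero.1 (Submodule.disjoint_def.1 hfg _ ?_ ?_) <;>
        rw [LinearMap.mem_ker, map_sub]
      · rw [hf, map_smul, LinearMap.mem_ker.1 hzf, map_zero, smul_zero, sub_zero]
      · rw [hg, map_smul, hzw, hw, sub_self]
    obtain ⟨c, rfl⟩ := Submodule.mem_span_singleton.1
      (mem_span_singleton_of_mem_lowerSpan hx.weight hzS hz_weight)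
    have hc : c = 0 := by simpa [hfx] using hzf
    exact hw₀ (by rw [← hzw, hc, zero_smul, map_zero])
  · have htop := hρ.eq_top (hS.map hf) (Submodule.mem_map_of_mem hx_mem) hfx
    rw [← LinearMap.range_eq_top, LinearMap.range_domRestrict, htop]

theorem IsSimpleRep.exists_equiv_of_isHighestWeightVector [Finite ι] (hρ : IsSimpleRep ρ)
    (hσ : IsSimpleRep σ) (hrk : Function.Injective rk) (hv : IsHighestWeightVector rk ρ lam v)
    (hv₀ : v ≠ 0) (hw : IsHighestWeightVector rk σ lam w) (hw₀ : w ≠ 0) :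
    ∃ e : V ≃ₗ[ℂ] W, ∀ u x, e (ρ u x) = σ u (e x) := by
  have hvw := hv.prodMk hw
  have hdisj : Disjoint (LinearMap.fst ℂ V W).ker (LinearMap.snd ℂ V W).ker :=
    Submodule.disjoint_def.2 fun _ h₁ h₂ => Prod.ext h₁ h₂
  obtain ⟨e, he⟩ := Submodule.exists_equiv_eq_graph
    (hρ.bijective_domRestrict_lowerSpan hσ hrk hvw (f := .fst ℂ V W) (g := .snd ℂ V W)
      (fun _ _ => rfl) (fun _ _ => rfl) hdisj hv₀ hw.weight hw₀)
    (hσ.bijective_domRestrict_lowerSpan hρ hrk hvw (f := .snd ℂ V W) (g := .fst ℂ V W)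
      (fun _ _ => rfl) (fun _ _ => rfl) hdisj.symm hw₀ hv.weight hv₀)
  refine ⟨e, fun u x => ?_⟩
  have hx : (x, e x) ∈ lowerSpan rk (prodRep ρ σ) (v, w) := by
    rw [he]
    exact (LinearMap.mem_graph_iff _ _).2 rfl
  have hux := hvw.isSubrep_lowerSpan hrk u _ hx
  rw [he] at hux
  exact ((LinearMap.mem_graph_iff _ _).1 hux).symm

end HighestWeight

/-! ### Monomials of `F_a` -/

namespace Ind

variable {m n : ℕ}

/-- The position of an index in the order `1 < ⋯ < m < 1̄ < ⋯ < n̄`, counted from zero. -/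
def rank (c : Ind m n) : ℕ :=
  finSumFinEquiv c

lemma rank_injective : Function.Injective (rank (m := m) (n := n)) :=
  Fin.val_injective.comp finSumFinEquiv.injective

lemma iltI_iff_rank_lt {c d : Ind m n} : iltI c d ↔ c.rank < d.rank := by
  rcases c with i | i <;> rcases d with j | j <;> simp [iltI, rank] <;> omega

lemma eq_z0_or_exists_eq_emb (i : Ind (m + 1) n) : i = z0 ∨ ∃ c : Ind m n, i = emb c := by
  rcases i with i | j
  · exact Fin.cases (Or.inl rfl) (fun i => Or.inr ⟨Sum.inl i, rfl⟩) i
  · exact Or.inr ⟨Sum.inr j, rfl⟩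

lemma rank_z0 : (z0 : Ind (m + 1) n).rank = 0 := by
  simp [z0, rank]

lemma rank_emb (c : Ind m n) : (emb c).rank = c.rank + 1 := by
  rcases c with i | j
  · simp [emb, rank]
  · simp [emb, rank, Nat.add_right_comm]

lemma sum_rank_lt_inl (i : Fin m) (f : Ind m n → ℂ) :
    ∑ j with j.rank < rank (Sum.inl i : Ind m n), f j = ∑ j with j < i, f (Sum.inl j) := by
  have hodd (j : Fin n) : ¬m + (j : ℕ) < i := by omega
  rw [Finset.sum_filter, Fintype.sum_sum_type]
  simp [Finset.sum_filter, rank, hodd]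

lemma sum_rank_lt_inr (t : Fin n) (f : Ind m n → ℂ) :
    ∑ j with j.rank < rank (Sum.inr t : Ind m n), f j =
      ∑ j, f (Sum.inl j) + ∑ j with j < t, f (Sum.inr j) := by
  have heven (j : Fin m) : (j : ℕ) < m + t := by omega
  rw [Finset.sum_filter, Fintype.sum_sum_type]
  simp [Finset.sum_filter, rank, heven]

end Ind

section Parity

variable {n : ℕ} {b : Fin n → Bool} {j : Fin n}

lemma cntB_update (b : Fin n → Bool) (j : Fin n) (c : Bool) :
    cntB (Function.update b j c) j = cntB b j := by
  refine congrArg Finset.card (Finset.filter_congr fun k _ => and_congr_right fun hk => ?_)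
  rw [Function.update_of_ne hk.ne]

lemma cntA_update_true (hj : b j = false) : cntA (Function.update b j true) = cntA b + 1 := by
  have hset : (Finset.univ.filter fun k => Function.update b j true k = true) =
      insert j (Finset.univ.filter fun k => b k = true) := by
    ext k
    rcases eq_or_ne k j with rfl | hk
    · simp
    · simp [hk]
  rw [cntA, hset, Finset.card_insert_of_notMem (by simp [hj]), cntA]

end Parity

namespace FaMon

variable {m n : ℕ}

/-- The monomial `(t_d/t_0)x` up to sign, provided it is nonzero. -/
def raise : Ind m n → FaMon m n → FaMon m n
  | Sum.inl i, x => (Function.update x.1 i (x.1 i + 1), x.2)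
  | Sum.inr j, x => (x.1, Function.update x.2 j true)

/-- The coefficient of `raise d x` in `(t_d/t_0)x`. -/
def mulCoeff : Ind m n → FaMon m n → ℂ
  | Sum.inl _, _ => 1
  | Sum.inr j, x => if x.2 j then 0 else (-1) ^ cntB x.2 j

/-- The eigenvalue of `t_0∂_d · t_d/t_0` on the monomial `x`. -/
def derivMulCoeff : Ind m n → FaMon m n → ℂ
  | Sum.inl i, x => x.1 i + 1
  | Sum.inr j, x => if x.2 j then 0 else 1

/-- The total degree of a monomial in the variables other than `t_0`. -/
def deg (x : FaMon m n) : ℕ :=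
  ∑ i, x.1 i + cntA x.2

lemma mulCoeff_inr_ne_zero_iff {j : Fin n} {x : FaMon m n} :
    mulCoeff (Sum.inr j) x ≠ 0 ↔ x.2 j = false := by
  simp [mulCoeff]

lemma derivMulCoeff_eq_zero {d : Ind m n} {x : FaMon m n} (h : mulCoeff d x = 0) :
    derivMulCoeff d x = 0 := by
  rcases d with i | j
  · simp [mulCoeff] at h
  · simpa [mulCoeff, derivMulCoeff] using h

lemma deg_raise {d : Ind m n} {x : FaMon m n} (h : mulCoeff d x ≠ 0) :
    (raise d x).deg = x.deg + 1 := by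
  rcases d with i | j
  · rw [deg, deg, raise, Finset.sum_update_of_mem (Finset.mem_univ i),
      ← Finset.add_sum_erase _ _ (Finset.mem_univ i), Finset.sdiff_singleton_eq_erase]
    ring
  · rw [deg, deg, raise, cntA_update_true (mulCoeff_inr_ne_zero_iff.1 h), add_assoc]

lemma parM_raise {d : Ind m n} {x : FaMon m n} (h : mulCoeff d x ≠ 0) :
    parM (raise d x) = parM x + pI d := by
  rcases d with i | j
  · rfl
  · exact cntA_update_true (mulCoeff_inr_ne_zero_iff.1 h)

lemma exists_raise_eq {x : FaMon m n} (hx : x.deg ≠ 0) :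
    ∃ d y, raise d y = x ∧ mulCoeff d y ≠ 0 ∧ derivMulCoeff d y ≠ 0 := by
  by_cases heven : ∃ i, x.1 i ≠ 0
  · obtain ⟨i, hi⟩ := heven
    refine ⟨Sum.inl i, (Function.update x.1 i (x.1 i - 1), x.2), ?_, one_ne_zero,
      Nat.cast_add_one_ne_zero _⟩
    simp [raise, Nat.sub_one_add_one hi]
  · by_cases hodd : ∃ j, x.2 j = true
    · obtain ⟨j, hj⟩ := hodd
      refine ⟨Sum.inr j, (x.1, Function.update x.2 j false), ?_, ?_, ?_⟩
      · simp [raise, ← hj]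
      · simp [mulCoeff]
      · simp [derivMulCoeff]
    · push Not at heven hodd
      exact absurd (by simp [deg, heven, cntA, hodd]) hx

lemma eq_hwMon_of_deg_eq_zero {x : FaMon m n} (hx : x.deg = 0) : x = hwMon m n := by
  simp only [deg, Nat.add_eq_zero_iff, Finset.sum_eq_zero_iff, cntA, Finset.card_eq_zero,
    Finset.filter_eq_empty_iff] at hx
  refine Prod.ext (funext fun i => hx.1 i (Finset.mem_univ i)) (funext fun j => ?_)
  simpa [hwMon] using hx.2 (Finset.mem_univ j)

end FaMon

lemma deg_hwMon (m n : ℕ) : (hwMon m n).deg = 0 := by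
  simp [FaMon.deg, hwMon, cntA]

lemma parM_hwMon (m n : ℕ) : parM (hwMon m n) = 0 := by
  simp [parM, hwMon, cntA]

section Operators

variable {m n : ℕ}

open FaMon

lemma mkOp_amono {M : Type} [AddCommGroup M] [Module ℂ M] (g : FaMon m n → M) (x : FaMon m n) :
    mkOp g (amono x) = g x := by
  simp [mkOp, amono]

lemma span_range_amono : Submodule.span ℂ (Set.range (amono (m := m) (n := n))) = ⊤ :=
  (Finsupp.basisSingleOne (R := ℂ)).span_eq

lemma aDivB_z0 : aDivB (z0 : Ind (m + 1) n) = 1 :=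
  rfl

lemma aDivB_emb (d : Ind m n) : aDivB (emb d) = aDiv d := by
  rcases d with i | j <;> rfl

lemma aDiv_amono (d : Ind m n) (x : FaMon m n) :
    aDiv d (amono x) = mulCoeff d x • amono (raise d x) := by
  rcases d with i | j
  · simp [aDiv, aDivE, mkOp_amono, mulCoeff, raise]
  · simp only [aDiv, aDivO, Sum.elim_inr, mkOp_amono, mulCoeff, raise, ite_smul, zero_smul]

lemma aParB_z0_amono (a : ℂ) (x : FaMon m n) :
    aParB a z0 (amono x) = (a - x.deg) • amono x := by
  simp only [aParB, z0, Sum.elim_inl, Fin.cases_zero, aPar0, mkOp_amono, deg]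
  push_cast
  rw [sub_sub]

lemma aParE_apply (i : Fin m) (f : FaSp m n) (x : FaMon m n) :
    aParE i f x = (x.1 i + 1) * f (raise (Sum.inl i) x) := by
  suffices h : Finsupp.lapply x ∘ₗ aParE i =
      ((x.1 i : ℂ) + 1) • Finsupp.lapply (raise (Sum.inl i) x) from LinearMap.congr_fun h f
  refine Finsupp.lhom_ext' fun z => LinearMap.ext_ring ?_
  change aParE i (amono z) x = (x.1 i + 1) * amono z (raise (Sum.inl i) x)
  rw [aParE, mkOp_amono]
  rcases eq_or_ne z (raise (Sum.inl i) x) with rfl | hz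
  · simp [raise, amono]
  · rw [amono, amono, Finsupp.single_eq_of_ne hz.symm, mul_zero, Finsupp.smul_apply, smul_eq_mul,
      mul_eq_zero, Nat.cast_eq_zero, or_iff_not_imp_left]
    intro hzi
    refine Finsupp.single_eq_of_ne fun hx => hz ?_
    simp [hx, raise, Nat.sub_one_add_one hzi]

lemma aParO_apply (j : Fin n) (f : FaSp m n) (x : FaMon m n) :
    aParO j f x = mulCoeff (Sum.inr j) x * f (raise (Sum.inr j) x) := by
  suffices h : Finsupp.lapply x ∘ₗ aParO j =
      mulCoeff (Sum.inr j) x • Finsupp.lapply (raise (Sum.inr j) x) from LinearMap.congr_fun h f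
  refine Finsupp.lhom_ext' fun z => LinearMap.ext_ring ?_
  change aParO j (amono z) x = mulCoeff (Sum.inr j) x * amono z (raise (Sum.inr j) x)
  rw [aParO, mkOp_amono, mulCoeff]
  rcases eq_or_ne z (raise (Sum.inr j) x) with rfl | hz
  · cases hxj : x.2 j
    · have hself : Function.update x.2 j false = x.2 := by rw [← hxj, Function.update_eq_self]
      simp [raise, amono, cntB_update, hself]
    · have hne : x ≠ (x.1, Function.update x.2 j false) := fun h => by
        simpa [hxj] using congrFun (congrArg Prod.snd h) j
      simp [raise, amono, cntB_update, Finsupp.single_eq_of_ne hne]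
  · rw [amono, amono, Finsupp.single_eq_of_ne hz.symm, mul_zero]
    split_ifs with hzj
    · rw [Finsupp.smul_apply, Finsupp.single_eq_of_ne, smul_zero]
      rintro rfl
      simp [raise, ← hzj] at hz
    · rfl

lemma aParB_emb_apply (a : ℂ) (d : Ind m n) (f : FaSp m n) (x : FaMon m n) :
    aParB a (emb d) f x = mulCoeff d x * derivMulCoeff d x * f (raise d x) := by
  rcases d with i | j
  · exact (aParE_apply i f x).trans (by simp [mulCoeff, derivMulCoeff])
  · refine (aParO_apply j f x).trans ?_
    cases hxj : x.2 j <;> simp [mulCoeff, derivMulCoeff, hxj]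

lemma aParB_emb_amono_hwMon (a : ℂ) (d : Ind m n) : aParB a (emb d) (amono (hwMon m n)) = 0 := by
  rcases d with i | j
  · simp [aParB, emb, aParE, mkOp_amono, hwMon]
  · simp [aParB, emb, aParO, mkOp_amono, hwMon]

lemma aParB_emb_aDiv_amono (a : ℂ) (d : Ind m n) (x : FaMon m n) :
    aParB a (emb d) (aDiv d (amono x)) = derivMulCoeff d x • amono x := by
  rw [aDiv_amono, map_smul]
  rcases d with i | j
  · simp [aParB, emb, aParE, mkOp_amono, mulCoeff, raise, derivMulCoeff]
  · cases hxj : x.2 j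
    · have hsq : (-1 : ℂ) ^ cntB x.2 j * (-1) ^ cntB x.2 j = 1 := by rw [← mul_pow]; simp
      have hself : Function.update x.2 j false = x.2 := by rw [← hxj, Function.update_eq_self]
      simp [aParB, emb, aParO, mkOp_amono, mulCoeff, raise, derivMulCoeff, cntB_update, hxj,
        smul_smul, hsq, hself]
    · simp [mulCoeff, derivMulCoeff, hxj]

lemma aTD_emb_emb_amono_hwMon (a : ℂ) (c d : Ind m n) :
    aTD a (emb c) (emb d) (amono (hwMon m n)) = 0 := by
  rw [aTD, Module.End.mul_apply, aParB_emb_amono_hwMon, map_zero]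

end Operators

/-! ### Descent to degree zero -/

section Descent

open FaMon

variable {m n : ℕ} {L : Type} [AddCommGroup L] [Module ℂ L]

/-- The coefficients `y_x ∈ L` of an element `y = ∑ x ⊗ y_x` of `F_a ⊗ L`. -/
def tensorCoeff : FaSp m n ⊗[ℂ] L ≃ₗ[ℂ] FaMon m n →₀ L :=
  TensorProduct.finsuppScalarLeft ℂ L (FaMon m n)

lemma tensorCoeff_tmul (f : FaSp m n) (w : L) (x : FaMon m n) :
    tensorCoeff (f ⊗ₜ[ℂ] w) x = f x • w :=
  TensorProduct.finsuppScalarLeft_apply_tmul_apply f w x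

lemma tensorCoeff_amono_tmul (x : FaMon m n) (w : L) :
    tensorCoeff (amono x ⊗ₜ[ℂ] w) = Finsupp.single x w := by
  rw [← LinearEquiv.eq_symm_apply, tensorCoeff, TensorProduct.finsuppScalarLeft_symm_apply_single,
    amono]

lemma amono_tmul_ne_zero (x : FaMon m n) {w : L} (hw : w ≠ 0) : amono x ⊗ₜ[ℂ] w ≠ 0 := by
  rw [← tensorCoeff.map_ne_zero_iff, tensorCoeff_amono_tmul]
  exact Finsupp.single_ne_zero.2 hw

lemma tensorCoeff_rTensor_aParB (a : ℂ) (d : Ind m n) (y : FaSp m n ⊗[ℂ] L) (x : FaMon m n) :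
    tensorCoeff ((aParB a (emb d)).rTensor L y) x =
      (mulCoeff d x * derivMulCoeff d x) • tensorCoeff y (raise d x) := by
  induction y with
  | zero => simp
  | tmul f w => rw [LinearMap.rTensor_tmul, tensorCoeff_tmul, tensorCoeff_tmul, aParB_emb_apply,
      mul_smul]
  | add y z hy hz => simp only [map_add, Finsupp.add_apply, smul_add, hy, hz]

/-- The largest degree of a monomial occurring in an element of `F_a ⊗ L`; zero for `0`. -/
def topDeg (y : FaSp m n ⊗[ℂ] L) : ℕ :=
  (tensorCoeff y).support.sup deg

lemma topDeg_rTensor_aParB_lt {a : ℂ} {d : Ind m n} {y : FaSp m n ⊗[ℂ] L}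
    (hy : (aParB a (emb d)).rTensor L y ≠ 0) :
    topDeg ((aParB a (emb d)).rTensor L y) < topDeg y := by
  have hsupp : (tensorCoeff ((aParB a (emb d)).rTensor L y)).support.Nonempty :=
    Finsupp.support_nonempty_iff.2 (tensorCoeff.map_ne_zero_iff.2 hy)
  obtain ⟨x, hx, htop⟩ := Finset.exists_mem_eq_sup _ hsupp deg
  rw [Finsupp.mem_support_iff, tensorCoeff_rTensor_aParB, smul_ne_zero_iff] at hx
  calc topDeg ((aParB a (emb d)).rTensor L y) = x.deg := htop
    _ < (raise d x).deg := by rw [deg_raise (left_ne_zero_of_mul hx.1)]; exact x.deg.lt_succ_self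
    _ ≤ topDeg y := Finset.le_sup (Finsupp.mem_support_iff.2 hx.2)

lemma eq_amono_hwMon_tmul {a : ℂ} {y : FaSp m n ⊗[ℂ] L}
    (hy : ∀ d, (aParB a (emb d)).rTensor L y = 0) :
    y = amono (hwMon m n) ⊗ₜ[ℂ] tensorCoeff y (hwMon m n) := by
  apply tensorCoeff.injective
  rw [tensorCoeff_amono_tmul]
  ext x
  rcases eq_or_ne x (hwMon m n) with rfl | hx
  · rw [Finsupp.single_eq_same]
  · obtain ⟨d, z, rfl, hmul, hderiv⟩ := exists_raise_eq (mt eq_hwMon_of_deg_eq_zero hx)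
    have hcoeff := tensorCoeff_rTensor_aParB a d y z
    rw [hy d, map_zero, Finsupp.zero_apply, eq_comm, smul_eq_zero] at hcoeff
    rw [Finsupp.single_eq_of_ne hx]
    exact hcoeff.resolve_left (mul_ne_zero hmul hderiv)

lemma exists_amono_hwMon_tmul_mem {a : ℂ} {N : Submodule ℂ (FaSp m n ⊗[ℂ] L)}
    (hN : ∀ d, ∀ y ∈ N, (aParB a (emb d)).rTensor L y ∈ N) (hN₀ : N ≠ ⊥) :
    ∃ w : L, w ≠ 0 ∧ amono (hwMon m n) ⊗ₜ[ℂ] w ∈ N := by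
  obtain ⟨y, hy, hy₀⟩ := N.exists_mem_ne_zero_of_ne_bot hN₀
  induction hD : topDeg y using Nat.strong_induction_on generalizing y with
  | _ D ih =>
    by_cases hkill : ∀ d, (aParB a (emb d)).rTensor L y = 0
    · have hyw := eq_amono_hwMon_tmul hkill
      refine ⟨_, fun hw => hy₀ ?_, hyw ▸ hy⟩
      rw [hyw, hw, TensorProduct.tmul_zero]
    · push Not at hkill
      obtain ⟨d, hd⟩ := hkill
      exact ih _ (hD ▸ topDeg_rTensor_aParB_lt hd) _ (hN d y hy) hd rfl

end Descent

/-! ### Climbing from degree zero -/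

namespace FaMon

variable {m n : ℕ}

/-- The factor `κ_c(x)` by which a highest weight vector of weight `lam` climbs from `x`
to `(t_c/t_0)x`; see `IsTensorRep.gen_emb_z0_tmul_add_sum`. -/
def climbCoeff (a : ℂ) (lam : Ind m n → ℂ) (c : Ind m n) (x : FaMon m n) : ℂ :=
  (a - x.deg) - (-1) ^ pI c * lam c +
    ∑ j with j.rank < c.rank, (-1) ^ pI j * derivMulCoeff j x

lemma exists_climbCoeff_inl_eq (a : ℂ) (lam : Ind m n → ℂ) (i : Fin m) (x : FaMon m n) :
    ∃ M : ℕ, climbCoeff a lam (Sum.inl i) x = a - lam (Sum.inl i) + (i : ℕ) - M := by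
  refine ⟨∑ j with ¬j < i, x.1 j + cntA x.2, ?_⟩
  have hcard : Finset.card {j | j < i} = i := by rw [Finset.filter_gt_eq_Iio, Fin.card_Iio]
  have hdeg : (x.deg : ℂ) =
      ∑ j with j < i, (x.1 j : ℂ) + ((∑ j with ¬j < i, x.1 j + cntA x.2 : ℕ) : ℂ) := by
    rw [deg, ← Finset.sum_filter_add_sum_filter_not Finset.univ (· < i) x.1]
    push_cast
    ring
  rw [climbCoeff, hdeg, Ind.sum_rank_lt_inl]
  simp only [pI, Sum.elim_inl, derivMulCoeff, pow_zero, one_mul, Finset.sum_add_distrib,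
    Finset.sum_const, hcard, nsmul_eq_mul, mul_one]
  ring

lemma exists_climbCoeff_inr_eq (a : ℂ) (lam : Ind m n → ℂ) {t : Fin n} {x : FaMon m n}
    (hx : x.2 t = false) : ∃ M : ℕ, t + M < n ∧
      climbCoeff a lam (Sum.inr t) x = a + lam (Sum.inr t) + m - (t : ℕ) - M := by
  refine ⟨Finset.card {j | ¬j < t ∧ x.2 j = true}, ?_, ?_⟩
  · have hle : Finset.card {j | ¬j < t ∧ x.2 j = true} ≤ Finset.card (Finset.Ioi t) :=
      Finset.card_le_card fun j hj => by
        rw [Finset.mem_filter_univ, not_lt] at hj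
        exact Finset.mem_Ioi.2 (hj.1.lt_of_ne (by rintro rfl; simp [hx] at hj))
    rw [Fin.card_Ioi] at hle
    omega
  · have hcard : Finset.card {j | j < t} = t := by rw [Finset.filter_gt_eq_Iio, Fin.card_Iio]
    have hcnt : cntA x.2 = ∑ j with j < t, (if x.2 j then 1 else 0) +
        Finset.card {j | ¬j < t ∧ x.2 j = true} := by
      rw [Finset.sum_boole, cntA, ← Finset.card_filter_add_card_filter_not (· < t)]
      simp only [Finset.filter_filter, and_comm, Nat.cast_id]
    have hterm : ∑ j with j < t, -(if x.2 j then (0 : ℂ) else 1) =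
        ∑ j with j < t, (if x.2 j then 1 else 0) - (t : ℕ) := by
      rw [eq_sub_iff_add_eq, ← hcard, Finset.card_eq_sum_ones, Nat.cast_sum,
        ← Finset.sum_add_distrib]
      refine Finset.sum_congr rfl fun j _ => ?_
      split_ifs <;> simp
    rw [climbCoeff, deg, Ind.sum_rank_lt_inr, hcnt]
    push_cast
    simp only [pI, Sum.elim_inl, Sum.elim_inr, derivMulCoeff, pow_zero, pow_one, one_mul,
      neg_one_mul, hterm, Finset.sum_add_distrib, Finset.sum_const, Finset.card_univ,
      Fintype.card_fin, nsmul_eq_mul, mul_one]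
    ring

end FaMon

/-- With `p = |c|`, `q = |j|` and `P` the parity of a monomial `x`, this compares moving `e_{cj}`
past `(t_j/t_0)x` with moving it past `x`. -/
lemma koszul_sign_mul (p q P : ℕ) :
    (-1 : ℂ) ^ q * (-1) ^ ((p + q) * (P + q)) = (-1) ^ (p * q) * (-1) ^ ((p + q) * P) := by
  rw [← pow_add, ← pow_add]
  apply neg_one_pow_congr
  grind

namespace IsTensorRep

open FaMon

variable {m n : ℕ} {a r : ℂ} {lam : Ind m n → ℂ} {L : Type} [AddCommGroup L] [Module ℂ L]
  {ρ : UEA (Ind m n) pI →ₐ[ℂ] Module.End ℂ L} {v : L}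
  {Θ : UEA (Ind (m + 1) n) pI →ₐ[ℂ] Module.End ℂ (FaSp m n ⊗[ℂ] L)}

lemma gen_z0_emb (hΘ : IsTensorRep a r ρ Θ) (d : Ind m n) :
    Θ (gen pI z0 (emb d)) = (aParB a (emb d)).rTensor L := by
  refine TensorProduct.ext (Finsupp.lhom_ext' fun x =>
    LinearMap.ext_ring (LinearMap.ext fun w => ?_))
  exact (hΘ.2.2.1 d x w).trans (by rw [aTD, aDivB_z0, one_mul]; rfl)

lemma gen_emb_z0_tmul (hΘ : IsTensorRep a r ρ Θ) (c : Ind m n) (x : FaMon m n) (w : L) :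
    Θ (gen pI (emb c) z0) (amono x ⊗ₜ[ℂ] w) =
      (a - x.deg) • (aDiv c (amono x) ⊗ₜ[ℂ] w) -
        ∑ j, ((-1 : ℂ) ^ (pI c * pI j) * (-1) ^ ((pI c + pI j) * parM x)) •
          (aDiv j (amono x) ⊗ₜ[ℂ] ρ (gen pI c j) w) := by
  rw [hΘ.2.1, aTD, Module.End.mul_apply, aParB_z0_amono, map_smul, aDivB_emb,
    ← TensorProduct.smul_tmul']

/-- The vectors `w` with `X ⊗ w ⊆ N` form a subrepresentation of `L`, because the `t_c∂_d` preserve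
the span of `X`. -/
lemma tmul_mem_of_tmul_mem (hΘ : IsTensorRep a r ρ Θ) (hρ : IsSimpleRep ρ)
    {N : Submodule ℂ (FaSp m n ⊗[ℂ] L)} (hN : IsSubrep Θ N) {X : Set (FaMon m n)}
    (hX : ∀ c d, ∀ x ∈ X, aTD a (emb c) (emb d) (amono x) ∈ Submodule.span ℂ (amono '' X))
    {w₀ : L} (hw₀ : w₀ ≠ 0) (hmem : ∀ x ∈ X, amono x ⊗ₜ[ℂ] w₀ ∈ N) (w : L) :
    ∀ x ∈ X, amono x ⊗ₜ[ℂ] w ∈ N := by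
  let K : Submodule ℂ L := ⨅ x ∈ X, N.comap (TensorProduct.mk ℂ (FaSp m n) L (amono x))
  have mem_K (w : L) : w ∈ K ↔ ∀ x ∈ X, amono x ⊗ₜ[ℂ] w ∈ N := by
    simp only [K, Submodule.mem_iInf, Submodule.mem_comap, TensorProduct.mk_apply]
  have hspan {w : L} (hw : w ∈ K) :
      Submodule.span ℂ (amono '' X) ≤ N.comap ((TensorProduct.mk ℂ (FaSp m n) L).flip w) :=
    Submodule.span_le.2 (Set.image_subset_iff.2 ((mem_K w).1 hw))
  have hK : IsSubrep ρ K := isSubrep_of_gen fun c d w hw => by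
    refine (mem_K _).2 fun x hx => ?_
    have hxw := (mem_K w).1 hw x hx
    have hscalar :
        (if c = d then ((-1 : ℂ) ^ (pI c * pI d) * r) • (amono x ⊗ₜ[ℂ] w) else 0) ∈ N := by
      split_ifs
      exacts [N.smul_mem _ hxw, N.zero_mem]
    have himage := hN (gen pI (emb c) (emb d)) _ hxw
    rw [hΘ.1] at himage
    have hrest : aTD a (emb c) (emb d) (amono x) ⊗ₜ[ℂ] w +
        (-1 : ℂ) ^ ((pI c + pI d) * parM x) • (amono x ⊗ₜ[ℂ] ρ (gen pI c d) w) ∈ N :=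
      (Submodule.add_mem_iff_left (R := ℂ) (M := FaSp m n ⊗[ℂ] L) N hscalar).1 himage
    have hsign := (Submodule.add_mem_iff_right (R := ℂ) (M := FaSp m n ⊗[ℂ] L) N
      (hspan hw (hX c d x hx))).1 hrest
    exact (N.smul_mem_iff (pow_ne_zero _ (neg_ne_zero.2 one_ne_zero))).1 hsign
  have htop : K = ⊤ := hρ.eq_top hK ((mem_K w₀).2 hmem) hw₀
  exact (mem_K w).1 (htop ▸ Submodule.mem_top)

lemma smul_gen_emb_emb_aDiv_tmul (hΘ : IsTensorRep a r ρ Θ) {c j : Ind m n} (hcj : c ≠ j)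
    (x : FaMon m n) (w : L) :
    (-1 : ℂ) ^ pI j • Θ (gen pI (emb c) (emb j)) (aDiv j (amono x) ⊗ₜ[ℂ] w) =
      ((-1) ^ pI j * derivMulCoeff j x) • (aDiv c (amono x) ⊗ₜ[ℂ] w) +
        ((-1 : ℂ) ^ (pI c * pI j) * (-1) ^ ((pI c + pI j) * parM x)) •
          (aDiv j (amono x) ⊗ₜ[ℂ] ρ (gen pI c j) w) := by
  by_cases hmul : mulCoeff j x = 0
  · simp [aDiv_amono, hmul, derivMulCoeff_eq_zero hmul]
  · have hTD : mulCoeff j x • aTD a (emb c) (emb j) (amono (raise j x)) =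
        derivMulCoeff j x • aDiv c (amono x) := by
      rw [← map_smul, ← aDiv_amono, aTD, Module.End.mul_apply, aParB_emb_aDiv_amono, map_smul,
        aDivB_emb]
    rw [aDiv_amono j, ← TensorProduct.smul_tmul', map_smul, hΘ.1, if_neg hcj, add_zero, smul_add,
      TensorProduct.smul_tmul', hTD, smul_add, ← TensorProduct.smul_tmul',
      ← TensorProduct.smul_tmul', smul_smul, ← koszul_sign_mul, parM_raise hmul]
    congr 1
    rw [smul_smul, smul_smul, smul_smul]
    congr 1
    ring

lemma gen_emb_z0_tmul_add_sum (hΘ : IsTensorRep a r ρ Θ)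
    (hv : IsHighestWeightVector Ind.rank ρ lam v) (c : Ind m n) (x : FaMon m n) :
    Θ (gen pI (emb c) z0) (amono x ⊗ₜ[ℂ] v) +
        ∑ j with j.rank < c.rank,
          (-1 : ℂ) ^ pI j • Θ (gen pI (emb c) (emb j)) (aDiv j (amono x) ⊗ₜ[ℂ] v) =
      climbCoeff a lam c x • (aDiv c (amono x) ⊗ₜ[ℂ] v) := by
  set S : Ind m n → FaSp m n ⊗[ℂ] L := fun j =>
    ((-1 : ℂ) ^ (pI c * pI j) * (-1) ^ ((pI c + pI j) * parM x)) •
      (aDiv j (amono x) ⊗ₜ[ℂ] ρ (gen pI c j) v) with hS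
  have hdiag : S c = ((-1) ^ pI c * lam c) • (aDiv c (amono x) ⊗ₜ[ℂ] v) := by
    have hsign : (-1 : ℂ) ^ (pI c * pI c) * (-1) ^ ((pI c + pI c) * parM x) = (-1) ^ pI c := by
      rw [((Even.add_self (pI c)).mul_right _).neg_one_pow, mul_one]
      rcases c with i | j <;> rfl
    simp only [hS, hv.weight, TensorProduct.tmul_smul, smul_smul, hsign]
  have hraise : ∑ j with ¬j.rank < c.rank, S j = S c := by
    refine Finset.sum_eq_single_of_mem c (by simp) fun j hj hjc => ?_
    have hlt : c.rank < j.rank := (not_lt.1 (Finset.mem_filter.1 hj).2).lt_of_ne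
      (Ind.rank_injective.ne hjc.symm)
    simp only [hS, hv.raising c j hlt, TensorProduct.tmul_zero, smul_zero]
  have hlower : ∑ j with j.rank < c.rank,
      (-1 : ℂ) ^ pI j • Θ (gen pI (emb c) (emb j)) (aDiv j (amono x) ⊗ₜ[ℂ] v) =
        (∑ j with j.rank < c.rank, (-1) ^ pI j * derivMulCoeff j x) •
          (aDiv c (amono x) ⊗ₜ[ℂ] v) + ∑ j with j.rank < c.rank, S j := by
    rw [Finset.sum_smul, ← Finset.sum_add_distrib]
    refine Finset.sum_congr rfl fun j hj => hΘ.smul_gen_emb_emb_aDiv_tmul ?_ x v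
    rintro rfl
    exact lt_irrefl _ (Finset.mem_filter.1 hj).2
  rw [hΘ.gen_emb_z0_tmul, ← Finset.sum_filter_add_sum_filter_not _ (fun j => j.rank < c.rank),
    hraise, hdiag, hlower, climbCoeff]
  module

lemma aDiv_amono_tmul_mem (hΘ : IsTensorRep a r ρ Θ)
    (hv : IsHighestWeightVector Ind.rank ρ lam v) {N : Submodule ℂ (FaSp m n ⊗[ℂ] L)}
    (hN : IsSubrep Θ N) {x : FaMon m n} (hκ : ∀ c, mulCoeff c x ≠ 0 → climbCoeff a lam c x ≠ 0)
    (hx : amono x ⊗ₜ[ℂ] v ∈ N) (c : Ind m n) : aDiv c (amono x) ⊗ₜ[ℂ] v ∈ N := by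
  induction c using (measure Ind.rank).wf.induction with
  | _ c ih =>
    by_cases hmul : mulCoeff c x = 0
    · simp [aDiv_amono, hmul]
    · rw [← N.smul_mem_iff (hκ c hmul), ← hΘ.gen_emb_z0_tmul_add_sum hv]
      refine N.add_mem (hN _ _ hx) (N.sum_mem fun j hj => N.smul_mem _ (hN _ _ (ih j ?_)))
      exact (Finset.mem_filter.1 hj).2

lemma amono_tmul_mem (hΘ : IsTensorRep a r ρ Θ)
    (hv : IsHighestWeightVector Ind.rank ρ lam v) {N : Submodule ℂ (FaSp m n ⊗[ℂ] L)}
    (hN : IsSubrep Θ N) (hκ : ∀ c x, mulCoeff c x ≠ 0 → climbCoeff a lam c x ≠ 0)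
    (hmem : amono (hwMon m n) ⊗ₜ[ℂ] v ∈ N) (x : FaMon m n) : amono x ⊗ₜ[ℂ] v ∈ N := by
  induction hD : x.deg generalizing x with
  | zero => rwa [eq_hwMon_of_deg_eq_zero hD]
  | succ D ih =>
    obtain ⟨d, y, rfl, hmul, -⟩ := exists_raise_eq (hD.trans_ne D.succ_ne_zero)
    have hy : y.deg = D := by rw [deg_raise hmul] at hD; exact Nat.succ_injective hD
    have hclimb := hΘ.aDiv_amono_tmul_mem hv hN (fun c => hκ c y) (ih y hy) d
    rw [aDiv_amono, ← TensorProduct.smul_tmul'] at hclimb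
    exact (N.smul_mem_iff hmul).1 hclimb

theorem isSimpleRep (hΘ : IsTensorRep a r ρ Θ) (hρ : IsSimpleRep ρ)
    (hv : IsHighestWeightVector Ind.rank ρ lam v) (hv₀ : v ≠ 0)
    (hκ : ∀ c x, mulCoeff c x ≠ 0 → climbCoeff a lam c x ≠ 0) : IsSimpleRep Θ := by
  refine fun N hN => or_iff_not_imp_left.2 fun hN₀ => ?_
  obtain ⟨w₀, hw₀, hmem⟩ := exists_amono_hwMon_tmul_mem (a := a)
    (fun d y hy => hΘ.gen_z0_emb d ▸ hN _ y hy) hN₀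
  have hbottom : amono (hwMon m n) ⊗ₜ[ℂ] v ∈ N := by
    refine hΘ.tmul_mem_of_tmul_mem hρ hN (X := {hwMon m n}) ?_ hw₀ ?_ v _ rfl
    · rintro c d x rfl
      rw [aTD_emb_emb_amono_hwMon]
      exact zero_mem _
    · rintro x rfl
      exact hmem
  have hall (w : L) (x : FaMon m n) : amono x ⊗ₜ[ℂ] w ∈ N := by
    refine hΘ.tmul_mem_of_tmul_mem hρ hN (X := Set.univ) (fun c d x _ => ?_) hv₀
      (fun x _ => hΘ.amono_tmul_mem hv hN hκ hbottom x) w x (Set.mem_univ x)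
    rw [Set.image_univ, span_range_amono]
    exact Submodule.mem_top
  rw [eq_top_iff, ← TensorProduct.span_tmul_eq_top, Submodule.span_le]
  rintro _ ⟨f, w, rfl⟩
  have hspan : Submodule.span ℂ (Set.range amono) ≤
      N.comap ((TensorProduct.mk ℂ (FaSp m n) L).flip w) :=
    Submodule.span_le.2 (Set.range_subset_iff.2 (hall w))
  exact hspan (span_range_amono ▸ Submodule.mem_top)

lemma isHighestWeightVector (hΘ : IsTensorRep a r ρ Θ)
    (hv : IsHighestWeightVector Ind.rank ρ lam v) :
    IsHighestWeightVector Ind.rank Θ (lamTilde a r lam) (amono (hwMon m n) ⊗ₜ[ℂ] v) where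
  raising i j hij := by
    obtain rfl | ⟨d, rfl⟩ := Ind.eq_z0_or_exists_eq_emb j
    · rw [Ind.rank_z0] at hij
      exact absurd hij (Nat.not_lt_zero _)
    obtain rfl | ⟨c, rfl⟩ := Ind.eq_z0_or_exists_eq_emb i
    · rw [hΘ.gen_z0_emb, LinearMap.rTensor_tmul, aParB_emb_amono_hwMon, TensorProduct.zero_tmul]
    · have hcd : c.rank < d.rank := by simpa [Ind.rank_emb] using hij
      rw [hΘ.1, aTD_emb_emb_amono_hwMon, hv.raising c d hcd,
        if_neg (ne_of_apply_ne Ind.rank hcd.ne)]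
      simp
  weight i := by
    obtain rfl | ⟨c, rfl⟩ := Ind.eq_z0_or_exists_eq_emb i
    · rw [hΘ.2.2.2, aTD, Module.End.mul_apply, aDivB_z0, Module.End.one_apply, aParB_z0_amono,
        deg_hwMon, Nat.cast_zero, sub_zero, ← TensorProduct.smul_tmul', ← add_smul]
      rfl
    · rw [hΘ.1, aTD_emb_emb_amono_hwMon, hv.weight, parM_hwMon, if_pos rfl,
        TensorProduct.zero_tmul, zero_add, mul_zero, pow_zero, one_smul, TensorProduct.tmul_smul,
        ← add_smul]
      rcases c with i | j
      · simp [lamTilde, emb, pI]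
      · simp [lamTilde, emb, pI, sub_eq_add_neg]

end IsTensorRep

lemma SimpleHW.isHighestWeightVector {m n : ℕ} {lam : Ind m n → ℂ} (HW : SimpleHW m n lam) :
    IsHighestWeightVector Ind.rank HW.ρ lam HW.v where
  raising i j hij := HW.hw i j (Ind.iltI_iff_rank_lt.2 hij)
  weight := HW.hwt

lemma lamTilde_add_rhoS_z0_sub_emb_inl {m n : ℕ} (a r : ℂ) (lam : Ind m n → ℂ) (i : Fin m) :
    (lamTilde a r lam z0 + rhoS (m := m + 1) (n := n) z0) -
        (lamTilde a r lam (emb (Sum.inl i)) + rhoS (m := m + 1) (n := n) (emb (Sum.inl i))) =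
      a - lam (Sum.inl i) + (i : ℕ) + 1 := by
  simp only [lamTilde, z0, Sum.elim_inl, Fin.cases_zero, rhoS, Fin.val_zero, emb, Sum.map_inl,
    Fin.cases_succ, Fin.val_succ]
  push_cast
  ring

lemma lamTilde_add_rhoS_z0_add_emb_inr {m n : ℕ} (a r : ℂ) (lam : Ind m n → ℂ) (j : Fin n) :
    (lamTilde a r lam z0 + rhoS (m := m + 1) (n := n) z0) +
        (lamTilde a r lam (emb (Sum.inr j)) + rhoS (m := m + 1) (n := n) (emb (Sum.inr j))) =
      a + lam (Sum.inr j) + m - (j : ℕ) := by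
  simp only [lamTilde, z0, Sum.elim_inl, Fin.cases_zero, rhoS, Fin.val_zero, emb, Sum.map_inr,
    id_eq, Sum.elim_inr]
  push_cast
  ring

theorem stmt8_general (m n : ℕ) (a r : ℂ) (lam : Ind m n → ℂ) (HW : SimpleHW m n lam)
    (HW' : SimpleHW (m+1) n (lamTilde a r lam))
    (Θ : UEA (Ind (m+1) n) pI →ₐ[ℂ] Module.End ℂ (FaSp m n ⊗[ℂ] HW.L))
    (hΘ : IsTensorRep a r HW.ρ Θ)
    (hcondE : ∀ i : Fin m, ¬∃ N : ℕ,
      (lamTilde a r lam z0 + rhoS (m := m+1) (n := n) z0)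
        - (lamTilde a r lam (emb (Sum.inl i)) + rhoS (m := m+1) (n := n) (emb (Sum.inl i)))
        = (N : ℂ) + 1)
    (hcondO : ∀ j : Fin n, ¬∃ N : ℕ, (j : ℕ) + N < n ∧
      (lamTilde a r lam z0 + rhoS (m := m+1) (n := n) z0)
        + (lamTilde a r lam (emb (Sum.inr j)) + rhoS (m := m+1) (n := n) (emb (Sum.inr j)))
        = (N : ℂ)) :
    (∀ N : Submodule ℂ (FaSp m n ⊗[ℂ] HW.L),
      (∀ (u : UEA (Ind (m+1) n) pI), ∀ x ∈ N, Θ u x ∈ N) → N = ⊥ ∨ N = ⊤) ∧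
    (∃ g : (FaSp m n ⊗[ℂ] HW.L) ≃ₗ[ℂ] HW'.L,
      ∀ (u : UEA (Ind (m+1) n) pI) (x : FaSp m n ⊗[ℂ] HW.L),
        g (Θ u x) = HW'.ρ u (g x)) := by
  have hκ (c : Ind m n) (x : FaMon m n) (hc : FaMon.mulCoeff c x ≠ 0) :
      FaMon.climbCoeff a lam c x ≠ 0 := by
    rcases c with i | j
    · obtain ⟨M, hM⟩ := FaMon.exists_climbCoeff_inl_eq a lam i x
      refine fun h => hcondE i ⟨M, ?_⟩
      rw [lamTilde_add_rhoS_z0_sub_emb_inl]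
      linear_combination hM.symm.trans h
    · obtain ⟨M, hMn, hM⟩ := FaMon.exists_climbCoeff_inr_eq a lam
        (FaMon.mulCoeff_inr_ne_zero_iff.1 hc)
      refine fun h => hcondO j ⟨M, hMn, ?_⟩
      rw [lamTilde_add_rhoS_z0_add_emb_inr]
      linear_combination hM.symm.trans h
  have hv := HW.isHighestWeightVector
  have hΘs : IsSimpleRep Θ := hΘ.isSimpleRep HW.simple hv HW.v_ne hκ
  exact ⟨hΘs, hΘs.exists_equiv_of_isHighestWeightVector HW'.simple Ind.rank_injective
    (hΘ.isHighestWeightVector hv) (amono_tmul_ne_zero _ HW.v_ne) HW'.isHighestWeightVector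
    HW'.v_ne⟩

/-- Corollary 4.4.  If `(λ̃+ρ_{m+1|n}, δ_0−δ_i) ∉ ℤ_{>0}` for `1 ≤ i ≤ m` and
`(λ̃+ρ_{m+1|n}, δ_0−δ_i) ∉ ℤ_{≥0}` for `1̄ ≤ i ≤ n̄`, then `F_a ⊗ L(λ)` is simple, hence
isomorphic to `L(λ̃)`.  Here `(λ̃+ρ, δ_0−δ_i) = (λ̃+ρ)_0 − (−1)^{|i|}(λ̃+ρ)_i`, where
`ρ = ρ_{m+1|n}` is realized by `rhoS (m := m+1)`. -/
theorem stmt8 (m n : ℕ) (a r : ℂ) (lam : Ind m n → ℂ) (HW : SimpleHW m n lam)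
    (HW' : SimpleHW (m+1) n (lamTilde a r lam))
    (Θ : UEA (Ind (m+1) n) pI →ₐ[ℂ] Module.End ℂ (FaSp m n ⊗[ℂ] HW.L))
    (hΘ : IsTensorRep a r HW.ρ Θ)
    (hcondE : ∀ i : Fin m, ¬∃ N : ℕ,
      (lamTilde a r lam z0 + rhoS (m := m+1) (n := n) z0)
        - (lamTilde a r lam (emb (Sum.inl i)) + rhoS (m := m+1) (n := n) (emb (Sum.inl i)))
        = (N : ℂ) + 1)
    (hcondO : ∀ j : Fin n, ¬∃ N : ℕ,
      (lamTilde a r lam z0 + rhoS (m := m+1) (n := n) z0)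
        + (lamTilde a r lam (emb (Sum.inr j)) + rhoS (m := m+1) (n := n) (emb (Sum.inr j)))
        = (N : ℂ)) :
    (∀ N : Submodule ℂ (FaSp m n ⊗[ℂ] HW.L),
      (∀ (u : UEA (Ind (m+1) n) pI), ∀ x ∈ N, Θ u x ∈ N) → N = ⊥ ∨ N = ⊤) ∧
    (∃ g : (FaSp m n ⊗[ℂ] HW.L) ≃ₗ[ℂ] HW'.L,
      ∀ (u : UEA (Ind (m+1) n) pI) (x : FaSp m n ⊗[ℂ] HW.L),
        g (Θ u x) = HW'.ρ u (g x)) :=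
  stmt8_general m n a r lam HW HW' Θ hΘ hcondE fun j ⟨N, _, h⟩ => hcondO j ⟨N, h⟩
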